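/- Let a be a real number with |a| < 1 and let f_a : ℝ → ℝ be defined by f_a(x) = 1/((1+(x−a)²)·(1+(x+a)²)). Then f_a has a strict global maximum at 0: for every real x ≠ 0, f_a(x) < f_a(0) = 1/(1+a²)². In particular f_a is unimodal. -/

import Mathlib

/-!
Completing the square writes the reciprocal of the density, at scale `c`, as
`(x² + (c² - a²))² + (2ac)²`. When `|a| ≤ |c|` the base `x² + (c² - a²)` is nonnegative and strictly
increasing in `|x|`, so the density is strictly decreasing in `|x|`.
-/

theorem sq_add_sub_sq_mul_sq_add_add_sq {R : Type*} [CommRing R] (a c x : R) :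
    (c ^ 2 + (x - a) ^ 2) * (c ^ 2 + (x + a) ^ 2) =
      (x ^ 2 + (c ^ 2 - a ^ 2)) ^ 2 + (2 * a * c) ^ 2 := by
  ring

theorem sq_add_sub_sq_mul_sq_add_add_sq_lt_of_abs_lt {R : Type*} [CommRing R] [LinearOrder R]
    [IsStrictOrderedRing R] {a c x y : R} (hac : |a| ≤ |c|) (hxy : |x| < |y|) :
    (c ^ 2 + (x - a) ^ 2) * (c ^ 2 + (x + a) ^ 2) <
      (c ^ 2 + (y - a) ^ 2) * (c ^ 2 + (y + a) ^ 2) := by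
  have hsub : 0 ≤ c ^ 2 - a ^ 2 := sub_nonneg.2 (sq_le_sq.2 hac)
  have hsq : x ^ 2 < y ^ 2 := sq_lt_sq.2 hxy
  rw [sq_add_sub_sq_mul_sq_add_add_sq, sq_add_sub_sq_mul_sq_add_add_sq]
  gcongr

theorem cauchy_conditional_density_unimodal_general {𝕜 : Type*} [Field 𝕜] [LinearOrder 𝕜]
    [IsStrictOrderedRing 𝕜] {a c : 𝕜} (hc : c ≠ 0) (hac : |a| ≤ |c|) (f : 𝕜 → 𝕜)
    (hf : f = fun x : 𝕜 => 1 / ((c ^ 2 + (x - a) ^ 2) * (c ^ 2 + (x + a) ^ 2))) :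
    f 0 = 1 / (c ^ 2 + a ^ 2) ^ 2 ∧ ∀ x y : 𝕜, |x| < |y| → f y < f x := by
  subst hf
  refine ⟨by ring, fun x y hxy => ?_⟩
  exact one_div_lt_one_div_of_lt (by positivity)
    (sq_add_sub_sq_mul_sq_add_add_sq_lt_of_abs_lt hac hxy)

/-- For `|a| < 1`, the density `f_a(x) = 1/((1+(x-a)²)(1+(x+a)²))` has a strict global
maximum at `0`, with `f_a(0) = 1/(1+a²)²`: it is unimodal. -/
theorem cauchy_conditional_density_unimodal (a : ℝ) (ha : |a| < 1) (f : ℝ → ℝ)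
    (hf : f = fun x : ℝ => 1 / ((1 + (x - a) ^ 2) * (1 + (x + a) ^ 2))) :
    f 0 = 1 / (1 + a ^ 2) ^ 2 ∧ ∀ x : ℝ, x ≠ 0 → f x < f 0 := by
  have h := cauchy_conditional_density_unimodal_general (a := a) one_ne_zero
    (by simpa only [abs_one] using ha.le) f (by simpa only [one_pow] using hf)
  exact ⟨by simpa only [one_pow] using h.1, fun x hx => h.2 0 x (by simpa using hx)⟩
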